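/- Let D = (V, A) be a directed hypergraph and let X₁, ..., Xₗ ⊆ V with ℓ ≥ 1 such that every Xᵢ contains a vertex not in any other Xⱼ. Set Yᵢ = Xᵢ − ∪_{j≠i} Xⱼ for 1 ≤ i ≤ ℓ, and let X₀ = Y₀ = V − ∪ᵢ Xᵢ. Then Σ_{i=0}^{ℓ} d⁻(Yᵢ) ≤ Σ_{i=0}^{ℓ} d⁺(Xᵢ). -/

import Mathlib

/-- In-degree of a vertex set in a directed hypergraph. -/
def dIn {V : Type*} [DecidableEq V] (A : Multiset (Finset V × V)) (X : Finset V) : ℕ :=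
  Multiset.countP (fun a => a.2 ∈ X ∧ (a.1 \ X).Nonempty) A

/-- Out-degree of a vertex set in a directed hypergraph. -/
def dOut {V : Type*} [DecidableEq V] (A : Multiset (Finset V × V)) (X : Finset V) : ℕ :=
  Multiset.countP (fun a => a.2 ∉ X ∧ (a.1 ∩ X).Nonempty) A

/-- Degree of a vertex set in an undirected hypergraph. -/
def degH {V : Type*} [DecidableEq V] (E : Multiset (Finset V)) (X : Finset V) : ℕ :=
  Multiset.countP (fun Z => (Z ∩ X).Nonempty ∧ (Z \ X).Nonempty) E

/-- `P` is a partition of the vertex set into nonempty parts. -/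
def IsPartition {V : Type*} [Fintype V] [DecidableEq V] (P : Finset (Finset V)) : Prop :=
  (∀ X ∈ P, X.Nonempty) ∧ (P : Set (Finset V)).PairwiseDisjoint id ∧
    P.biUnion id = Finset.univ

/-- Number of hyperedges intersecting at least two members of `P`. -/
def ePart {V : Type*} [DecidableEq V] (E : Multiset (Finset V)) (P : Finset (Finset V)) : ℕ :=
  Multiset.countP (fun Z => 1 < (P.filter (fun X => (Z ∩ X).Nonempty)).card) E

/-- `A` is an orientation of the hypergraph `E`: each hyperedge `X` gets a head `v ∈ X`,
producing the hyperarc `(X − v, v)`. -/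
def IsOrientation {V : Type*} [DecidableEq V] (E : Multiset (Finset V))
    (A : Multiset (Finset V × V)) : Prop :=
  A.map (fun a => insert a.2 a.1) = E ∧ ∀ a ∈ A, a.2 ∉ a.1

/-- `L` is an `(s,t)`-hyperpath in the directed hypergraph `A`. -/
def IsHyperpath {V : Type*} [DecidableEq V] (A : Multiset (Finset V × V)) (s t : V)
    (L : List (Finset V × V)) : Prop :=
  L ≠ [] ∧ (∀ a ∈ L, a ∈ A) ∧ (∀ a ∈ L.head?, s ∈ a.1) ∧ (∀ a ∈ L.getLast?, t = a.2) ∧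
    L.Chain' (fun a b => a.2 ∈ b.1) ∧ (L.map Prod.snd).Nodup

/-! The inequality holds arc by arc. The sets `Y₀, …, Yₗ` are pairwise disjoint, so the head `v` of an
arc `(Z, v)` lies in at most one of them and the arc contributes at most `1` to the left side. If it
does enter some `Yᵢ`, pick a tail vertex `u ∉ Yᵢ`. For some `j ≠ i` (possibly `j = 0`), `u ∈ Xⱼ`,
while `v ∈ Yᵢ` avoids every such `Xⱼ`, so the arc leaves `Xⱼ` and contributes at least `1` to the
right side. -/

/-- The contribution of the single hyperarc `a` to the two sides of the counting inequality. -/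
lemma lovasz_counting_arc {V : Type*} [Fintype V] [DecidableEq V] (a : Finset V × V)
    {ℓ : ℕ} (X : Fin ℓ → Finset V) :
    dIn {a} (Finset.univ \ Finset.univ.biUnion X) +
      ∑ i : Fin ℓ, dIn {a} (X i \ (Finset.univ.erase i).biUnion X) ≤
    dOut {a} (Finset.univ \ Finset.univ.biUnion X) + ∑ i : Fin ℓ, dOut {a} (X i) := by
  have hin : ∀ S, dIn {a} S = if a.2 ∈ S ∧ (a.1 \ S).Nonempty then 1 else 0 := fun S => by
    simp [dIn, ← Multiset.cons_zero, Multiset.countP_cons]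
  have hout : ∀ S, dOut {a} S = if a.2 ∉ S ∧ (a.1 ∩ S).Nonempty then 1 else 0 := fun S => by
    simp [dOut, ← Multiset.cons_zero, Multiset.countP_cons]
  have leaves : ∀ j, ∀ u ∈ a.1, u ∈ X j → a.2 ∉ X j → 1 ≤ ∑ i : Fin ℓ, dOut {a} (X i) := by
    intro j u hu huj hv
    have hj : dOut {a} (X j) = 1 := by
      rw [hout, if_pos ⟨hv, u, Finset.mem_inter.2 ⟨hu, huj⟩⟩]
    exact hj ▸ Finset.single_le_sum (f := fun i => dOut {a} (X i))
      (fun _ _ => Nat.zero_le _) (Finset.mem_univ j)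
  by_cases h : ∃ i, a.2 ∈ X i
  · obtain ⟨i₀, hi₀⟩ := h
    have h0 : dIn {a} (Finset.univ \ Finset.univ.biUnion X) = 0 := by
      rw [hin, if_neg]
      rintro ⟨hv, -⟩
      simp only [Finset.mem_sdiff, Finset.mem_biUnion, Finset.mem_univ, true_and] at hv
      exact hv ⟨i₀, hi₀⟩
    -- Only the term `i₀` can be nonzero, since `Yᵢ` is disjoint from `X i₀` for `i ≠ i₀`.
    have hs : ∑ i : Fin ℓ, dIn {a} (X i \ (Finset.univ.erase i).biUnion X) =
        dIn {a} (X i₀ \ (Finset.univ.erase i₀).biUnion X) := by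
      refine Finset.sum_eq_single i₀ (fun i _ hne => ?_) (by simp)
      rw [hin, if_neg]
      rintro ⟨hv, -⟩
      exact (Finset.mem_sdiff.1 hv).2
        (Finset.mem_biUnion.2 ⟨i₀, Finset.mem_erase.2 ⟨hne.symm, Finset.mem_univ _⟩, hi₀⟩)
    rw [h0, hs, hin, zero_add]
    split_ifs with hc
    · obtain ⟨hv, u, hu⟩ := hc
      obtain ⟨hu, huY⟩ := Finset.mem_sdiff.1 hu
      have hvj : ∀ j, j ≠ i₀ → a.2 ∉ X j := fun j hj hvj => (Finset.mem_sdiff.1 hv).2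
        (Finset.mem_biUnion.2 ⟨j, Finset.mem_erase.2 ⟨hj, Finset.mem_univ _⟩, hvj⟩)
      by_cases hex : ∃ j, j ≠ i₀ ∧ u ∈ X j
      · obtain ⟨j, hj, huj⟩ := hex
        exact (leaves j u hu huj (hvj j hj)).trans (Nat.le_add_left _ _)
      · -- Here `u` lies in no `Xⱼ` at all, so the arc leaves `X₀`.
        push Not at hex
        have hui : u ∉ X i₀ := fun hui => huY (Finset.mem_sdiff.2 ⟨hui, by
          simpa using hex⟩)
        have : dOut {a} (Finset.univ \ Finset.univ.biUnion X) = 1 := by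
          rw [hout, if_pos]
          refine ⟨fun hv0 => (Finset.mem_sdiff.1 hv0).2
            (Finset.mem_biUnion.2 ⟨i₀, Finset.mem_univ _, hi₀⟩), u, ?_⟩
          simp only [Finset.mem_inter, Finset.mem_sdiff, Finset.mem_biUnion, Finset.mem_univ,
            true_and, not_exists]
          refine ⟨hu, fun j => ?_⟩
          by_cases hj : j = i₀
          · exact hj ▸ hui
          · exact hex j hj
        omega
    · exact Nat.zero_le _
  · push Not at h
    have hs : ∑ i : Fin ℓ, dIn {a} (X i \ (Finset.univ.erase i).biUnion X) = 0 := by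
      refine Finset.sum_eq_zero fun i _ => ?_
      rw [hin, if_neg]
      exact fun hc => h i (Finset.mem_sdiff.1 hc.1).1
    rw [hs, hin, add_zero]
    split_ifs with hc
    · obtain ⟨-, u, hu⟩ := hc
      simp only [Finset.mem_sdiff, Finset.mem_biUnion, Finset.mem_univ, true_and, not_not] at hu
      obtain ⟨hu, j, huj⟩ := hu
      exact (leaves j u hu huj (h j)).trans (Nat.le_add_left _ _)
    · exact Nat.zero_le _

/-- The counting inequality `Σ_{i=0}^{ℓ} d⁻(Yᵢ) ≤ Σ_{i=0}^{ℓ} d⁺(Xᵢ)`,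
where `Yᵢ = Xᵢ − ∪_{j≠i} Xⱼ` and `X₀ = Y₀ = V − ∪ᵢ Xᵢ`. -/
theorem lovasz_counting
    {V : Type*} [Fintype V] [DecidableEq V] (A : Multiset (Finset V × V))
    (htails : ∀ a ∈ A, a.1.Nonempty)
    (ℓ : ℕ) (hℓ : 1 ≤ ℓ) (X : Fin ℓ → Finset V)
    (hY : ∀ i : Fin ℓ, (X i \ (Finset.univ.erase i).biUnion X).Nonempty) :
    dIn A (Finset.univ \ Finset.univ.biUnion X) +
      ∑ i : Fin ℓ, dIn A (X i \ (Finset.univ.erase i).biUnion X) ≤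
    dOut A (Finset.univ \ Finset.univ.biUnion X) + ∑ i : Fin ℓ, dOut A (X i) := by
  clear htails
  induction A using Multiset.induction_on with
  | empty => simp [dIn]
  | cons a A ih =>
    have hin : ∀ S, dIn (a ::ₘ A) S = dIn {a} S + dIn A S := fun S => by
      rw [← Multiset.singleton_add, dIn, Multiset.countP_add]; rfl
    have hout : ∀ S, dOut (a ::ₘ A) S = dOut {a} S + dOut A S := fun S => by
      rw [← Multiset.singleton_add, dOut, Multiset.countP_add]; rfl
    have ha := lovasz_counting_arc a X
    simp only [hin, hout, Finset.sum_add_distrib]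
    omega
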